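/- Soundness of the labelled sequent calculus for CPL₀: if a labelled sequent ⊢ L is derivable in the proof system for CPL₀, then it is valid; that is, if L = b ↣ A then ⟦b⟧ ⊆ ⟦A⟧, and if L = b ↢ A then ⟦A⟧ ⊆ ⟦b⟧. -/

import Mathlib

open MeasureTheory

/-- The Cantor space `2^ω` of infinite binary sequences. -/
abbrev Cantor : Type := ℕ → Bool

/-- Rational numbers in the unit interval `[0,1]`. -/
abbrev I01 : Type := (Set.Icc (0 : ℚ) 1)

/-- The value of a rational `q ∈ [0,1]` as an extended nonnegative real. -/
noncomputable def qq (q : I01) : ENNReal := ENNReal.ofReal (q.1 : ℝ)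

/-- `μ` is the fair-coin Bernoulli (uniform) product measure on the Cantor space:
it is a probability measure giving each cylinder fixing the values on a finite set `s`
of coordinates the measure `2^{-|s|}`. -/
def IsCantorMeasure (μ : Measure Cantor) : Prop :=
  IsProbabilityMeasure μ ∧
    ∀ (s : Finset ℕ) (v : ℕ → Bool),
      μ {f : Cantor | ∀ i ∈ s, f i = v i} = (2 : ENNReal)⁻¹ ^ s.card

/-- Boolean formulas `b ::= xᵢ | ⊤ | ⊥ | ¬b | b ∧ c | b ∨ c`. -/
inductive BF : Type where
  | var : ℕ → BF
  | tt : BF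
  | ff : BF
  | neg : BF → BF
  | conj : BF → BF → BF
  | disj : BF → BF → BF
deriving DecidableEq

/-- The interpretation `⟦b⟧ ⊆ 2^ω` of a Boolean formula. -/
def BF.sem : BF → Set Cantor
  | .var i => {f | f i = true}
  | .tt => Set.univ
  | .ff => ∅
  | .neg b => (BF.sem b)ᶜ
  | .conj b c => BF.sem b ∩ BF.sem c
  | .disj b c => BF.sem b ∪ BF.sem c

/-- Formulas of univariate counting propositional logic CPL₀:
`A ::= i | ¬A | A ∧ B | A ∨ B | C^q A | D^q A` with `q` a rational in `[0,1]`. -/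
inductive CPL0 : Type where
  | atom : ℕ → CPL0
  | neg : CPL0 → CPL0
  | conj : CPL0 → CPL0 → CPL0
  | disj : CPL0 → CPL0 → CPL0
  | cnt : I01 → CPL0 → CPL0
  | dnt : I01 → CPL0 → CPL0
deriving DecidableEq

open scoped Classical in
/-- The interpretation `⟦A⟧ ⊆ 2^ω` of a CPL₀ formula (relative to the measure `μ`). -/
noncomputable def CPL0.sem (μ : Measure Cantor) : CPL0 → Set Cantor
  | .atom i => {f | f i = true}
  | .neg A => (CPL0.sem μ A)ᶜ
  | .conj A B => CPL0.sem μ A ∩ CPL0.sem μ B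
  | .disj A B => CPL0.sem μ A ∪ CPL0.sem μ B
  | .cnt q A => if qq q ≤ μ (CPL0.sem μ A) then Set.univ else ∅
  | .dnt q A => if μ (CPL0.sem μ A) < qq q then Set.univ else ∅

/-- Labelled formulas: `b ↣ A` (`fwd`) and `b ↢ A` (`bwd`). -/
inductive LF : Type where
  | fwd : BF → CPL0 → LF
  | bwd : BF → CPL0 → LF
deriving DecidableEq

/-- Validity of a labelled formula: `b ↣ A` is valid when `⟦b⟧ ⊆ ⟦A⟧`,
and `b ↢ A` is valid when `⟦A⟧ ⊆ ⟦b⟧`. -/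
def LF.valid (μ : Measure Cantor) : LF → Prop
  | .fwd b A => BF.sem b ⊆ CPL0.sem μ A
  | .bwd b A => CPL0.sem μ A ⊆ BF.sem b

/-- The labelled, one-sided, single-succedent sequent calculus for CPL₀:
`Der μ L` means that the sequent `⊢ L` is derivable. -/
inductive Der (μ : Measure Cantor) : LF → Prop where
  | ax1 {b : BF} {n : ℕ} :
      BF.sem b ⊆ BF.sem (.var n) → Der μ (.fwd b (.atom n))
  | ax2 {b : BF} {n : ℕ} :
      BF.sem (.var n) ⊆ BF.sem b → Der μ (.bwd b (.atom n))
  | runion {b c d : BF} {A : CPL0} :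
      Der μ (.fwd c A) → Der μ (.fwd d A) →
      BF.sem b ⊆ BF.sem (.disj c d) → Der μ (.fwd b A)
  | rinter {b c d : BF} {A : CPL0} :
      Der μ (.bwd c A) → Der μ (.bwd d A) →
      BF.sem (.conj c d) ⊆ BF.sem b → Der μ (.bwd b A)
  | negF {b c : BF} {A : CPL0} :
      Der μ (.bwd c A) → BF.sem b ⊆ BF.sem (.neg c) → Der μ (.fwd b (.neg A))
  | negB {b c : BF} {A : CPL0} :
      Der μ (.fwd c A) → BF.sem (.neg c) ⊆ BF.sem b → Der μ (.bwd b (.neg A))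
  | disjF1 {b : BF} {A B : CPL0} :
      Der μ (.fwd b A) → Der μ (.fwd b (.disj A B))
  | disjF2 {b : BF} {A B : CPL0} :
      Der μ (.fwd b B) → Der μ (.fwd b (.disj A B))
  | disjB {b : BF} {A B : CPL0} :
      Der μ (.bwd b A) → Der μ (.bwd b B) → Der μ (.bwd b (.disj A B))
  | conjF {b : BF} {A B : CPL0} :
      Der μ (.fwd b A) → Der μ (.fwd b B) → Der μ (.fwd b (.conj A B))
  | conjB1 {b : BF} {A B : CPL0} :
      Der μ (.bwd b A) → Der μ (.bwd b (.conj A B))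
  | conjB2 {b : BF} {A B : CPL0} :
      Der μ (.bwd b B) → Der μ (.bwd b (.conj A B))
  | muF {b : BF} {A : CPL0} :
      μ (BF.sem b) = 0 → Der μ (.fwd b A)
  | muB {b : BF} {A : CPL0} :
      μ (BF.sem b) = 1 → Der μ (.bwd b A)
  | cntF {b c : BF} {q : I01} {A : CPL0} :
      Der μ (.fwd c A) → qq q ≤ μ (BF.sem c) → Der μ (.fwd b (.cnt q A))
  | cntB {b c : BF} {q : I01} {A : CPL0} :
      Der μ (.bwd c A) → μ (BF.sem c) < qq q → Der μ (.bwd b (.cnt q A))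
  | dntF {b c : BF} {q : I01} {A : CPL0} :
      Der μ (.bwd c A) → μ (BF.sem c) < qq q → Der μ (.fwd b (.dnt q A))
  | dntB {b c : BF} {q : I01} {A : CPL0} :
      Der μ (.fwd c A) → qq q ≤ μ (BF.sem c) → Der μ (.bwd b (.dnt q A))

theorem BF.sem_finite (b : BF) : ∃ s : Finset ℕ, ∀ f g : Cantor,
    (∀ i ∈ s, f i = g i) → (f ∈ BF.sem b ↔ g ∈ BF.sem b) := by
  classical
  induction b with
  | var n => exact ⟨{n}, fun f g h => by simp [BF.sem, h n (by simp)]⟩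
  | tt => exact ⟨∅, fun f g h => by simp [BF.sem]⟩
  | ff => exact ⟨∅, fun f g h => by simp [BF.sem]⟩
  | neg b ih =>
    obtain ⟨s, hs⟩ := ih
    exact ⟨s, fun f g h => by simp [BF.sem, hs f g h]⟩
  | conj b c ihb ihc =>
    obtain ⟨s, hs⟩ := ihb
    obtain ⟨t, ht⟩ := ihc
    refine ⟨s ∪ t, fun f g h => ?_⟩
    have h1 := hs f g (fun i hi => h i (Finset.mem_union_left _ hi))
    have h2 := ht f g (fun i hi => h i (Finset.mem_union_right _ hi))
    simp [BF.sem, h1, h2]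
  | disj b c ihb ihc =>
    obtain ⟨s, hs⟩ := ihb
    obtain ⟨t, ht⟩ := ihc
    refine ⟨s ∪ t, fun f g h => ?_⟩
    have h1 := hs f g (fun i hi => h i (Finset.mem_union_left _ hi))
    have h2 := ht f g (fun i hi => h i (Finset.mem_union_right _ hi))
    simp [BF.sem, h1, h2]

theorem BF.sem_measurable (b : BF) : MeasurableSet (BF.sem b) := by
  induction b with
  | var n =>
    have h : Measurable (fun f : Cantor => f n) := measurable_pi_apply n
    exact h (measurableSet_singleton true)
  | tt => exact MeasurableSet.univ
  | ff => exact MeasurableSet.empty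
  | neg b ih => exact ih.compl
  | conj b c ihb ihc => exact ihb.inter ihc
  | disj b c ihb ihc => exact ihb.union ihc

theorem BF.sem_empty {μ : Measure Cantor} (hμ : IsCantorMeasure μ) (b : BF)
    (h : μ (BF.sem b) = 0) : BF.sem b = ∅ := by
  by_contra hne
  obtain ⟨g, hg⟩ := Set.nonempty_iff_ne_empty.mpr hne
  obtain ⟨s, hs⟩ := b.sem_finite
  have hsub : {f : Cantor | ∀ i ∈ s, f i = g i} ⊆ BF.sem b :=
    fun f hf => (hs f g hf).mpr hg
  have h0 := measure_mono_null hsub h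
  rw [hμ.2 s g] at h0
  simp at h0

/-- **Soundness.** If a labelled sequent `⊢ L` is derivable in the
proof system for CPL₀, then it is valid: if `L = b ↣ A` then `⟦b⟧ ⊆ ⟦A⟧`, and if
`L = b ↢ A` then `⟦A⟧ ⊆ ⟦b⟧`. -/
theorem cpl0_soundness
    (μ : Measure Cantor) (hμ : IsCantorMeasure μ) (L : LF) (h : Der μ L) :
    L.valid μ := by
  induction h with
  | ax1 h => exact h
  | ax2 h => exact h
  | runion _ _ h ih1 ih2 => exact h.trans (Set.union_subset ih1 ih2)
  | rinter _ _ h ih1 ih2 => exact (Set.subset_inter ih1 ih2).trans h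
  | negF _ h ih => exact h.trans (Set.compl_subset_compl.mpr ih)
  | negB _ h ih => exact (Set.compl_subset_compl.mpr ih).trans h
  | disjF1 _ ih => exact Set.subset_union_of_subset_left ih _
  | disjF2 _ ih => exact Set.subset_union_of_subset_right ih _
  | disjB _ _ ih1 ih2 => exact Set.union_subset ih1 ih2
  | conjF _ _ ih1 ih2 => exact Set.subset_inter ih1 ih2
  | conjB1 _ ih => exact Set.inter_subset_left.trans ih
  | conjB2 _ ih => exact Set.inter_subset_right.trans ih
  | muF h => simp [LF.valid, BF.sem_empty hμ _ h]
  | @muB b A h =>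
    have := hμ.1
    have h0 : μ (BF.sem (.neg b)) = 0 := (prob_compl_eq_zero_iff b.sem_measurable).mpr h
    have h1 := BF.sem_empty hμ _ h0
    simp only [BF.sem, Set.compl_empty_iff] at h1
    simp [LF.valid, h1]
  | cntF _ h ih =>
    have := h.trans (measure_mono ih)
    simp [LF.valid, CPL0.sem, this]
  | cntB _ h ih =>
    have := (measure_mono ih).trans_lt h
    simp [LF.valid, CPL0.sem, not_le.mpr this]
  | dntF _ h ih =>
    have := (measure_mono ih).trans_lt h
    simp [LF.valid, CPL0.sem, this]
  | dntB _ h ih =>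
    have := h.trans (measure_mono ih)
    simp [LF.valid, CPL0.sem, not_lt.mpr this]
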